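/- arXiv:2401.11016 — 3 statements merged into one kernel-verified Lean document; each statement's English description precedes it below -/
import Mathlib

section
/- For all n ≥ 1 and all k with 1 ≤ k ≤ n, consideration probabilities are not identifiable in the PL+C model: there exist a utility vector u : U → ℝ and two distinct consideration-probability vectors p, p' : U → (0,1] such that the PL+C ranking distributions they induce coincide, i.e., Pr_{PL+C}(r) computed with (u, p) equals Pr_{PL+C}(r) computed with (u, p') for every length-k ranking r. -/
open scoped Classical
open Finset

noncomputable section

/-- Weight of a consideration set `C`: each item in `C` is considered (prob `p i`),
each item outside is not considered (prob `1 - p j`). -/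
def considerWeight (n : ℕ) (p : Fin n → ℝ) (C : Finset (Fin n)) : ℝ :=
  (∏ i ∈ C, p i) * ∏ j ∈ Cᶜ, (1 - p j)

/-- Normalizing constant `z_{k,p}`: total weight of consideration sets of size at least `k`. -/
def zConst (n k : ℕ) (p : Fin n → ℝ) : ℝ :=
  ∑ C ∈ Finset.univ.filter (fun C : Finset (Fin n) => k ≤ C.card), considerWeight n p C

/-- Probability of consideration set `C` (conditioned on `|C| ≥ k`). -/
def prC (n k : ℕ) (p : Fin n → ℝ) (C : Finset (Fin n)) : ℝ :=
  if k ≤ C.card then considerWeight n p C / zConst n k p else 0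

/-- Plackett–Luce probability of the length-`k` ranking `r` given consideration set `C`. -/
def prPL (n k : ℕ) (u : Fin n → ℝ) (r : Fin k ↪ Fin n) (C : Finset (Fin n)) : ℝ :=
  if ∀ t : Fin k, r t ∈ C then
    ∏ t : Fin k, Real.exp (u (r t)) /
      ∑ j ∈ C \ (Finset.Iio t).image r, Real.exp (u j)
  else 0

/-- Plackett–Luce-with-consideration (PL+C) probability of the ranking `r`. -/
def prPLC (n k : ℕ) (u p : Fin n → ℝ) (r : Fin k ↪ Fin n) : ℝ :=
  ∑ C : Finset (Fin n), prC n k p C * prPL n k u r C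

/-- PL probability of a set of rankings. -/
def prPLset (n k : ℕ) (u : Fin n → ℝ) (R : Finset (Fin k ↪ Fin n)) (C : Finset (Fin n)) : ℝ :=
  ∑ r ∈ R, prPL n k u r C

/-- PL+C probability of a set of rankings. -/
def prPLCset (n k : ℕ) (u p : Fin n → ℝ) (R : Finset (Fin k ↪ Fin n)) : ℝ :=
  ∑ r ∈ R, prPLC n k u p r

/-- `R_{i≤ℓ}`: the set of length-`k` rankings with item `i` among the top `ℓ` positions. -/
def topSet (n k : ℕ) (i : Fin n) (ℓ : ℕ) : Finset (Fin k ↪ Fin n) :=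
  Finset.univ.filter (fun r => ∃ t : Fin k, (t : ℕ) < ℓ ∧ r t = i)

/-!
A Plackett–Luce ranking is drawn by choosing the first item and then ranking the remaining
items in the same way, so PL, and hence PL+C, is a probability distribution on rankings. The model
does not depend on how the items are labelled. If all utilities agree and all consideration
probabilities agree, this symmetry makes every ranking equally likely, whatever the common
consideration probability is.
-/

variable {n k : ℕ}

lemma sum_embedding_fin_succ {ι M : Type*} [Fintype ι] [DecidableEq ι] [AddCommMonoid M]
    (f : (Fin (k + 1) ↪ ι) → M) :
    ∑ r, f r = ∑ e : Fin k ↪ ι, ∑ x : {x // x ∉ Set.range e}, f (Fin.Embedding.cons e x.2) := by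
  rw [← Fintype.sum_sigma']
  refine Fintype.sum_equiv (Equiv.embeddingFinSucc k ι) _ _ fun r => congrArg f ?_
  ext t
  cases t using Fin.cases <;> rfl

lemma prPL_eq_zero_of_notMem (u : Fin n → ℝ) {r : Fin k ↪ Fin n} {C : Finset (Fin n)} {t : Fin k}
    (ht : r t ∉ C) : prPL n k u r C = 0 :=
  if_neg fun h => ht (h t)

lemma prPL_cons (u : Fin n → ℝ) {e : Fin k ↪ Fin n} {x : Fin n} (hx : x ∉ Set.range e)
    {C : Finset (Fin n)} (hxC : x ∈ C) :
    prPL n (k + 1) u (Fin.Embedding.cons e hx) C =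
      Real.exp (u x) / (∑ j ∈ C, Real.exp (u j)) * prPL n k u e (C.erase x) := by
  have mem_iff : (∀ t, Fin.Embedding.cons e hx t ∈ C) ↔ ∀ t, e t ∈ C.erase x := by
    have ne_x : ∀ t, e t ≠ x := fun t h => hx ⟨t, h⟩
    simp [Fin.forall_fin_succ, hxC, ne_x]
  have remaining (t : Fin k) : C \ (Iio t.succ).image (Fin.Embedding.cons e hx) =
      C.erase x \ (Iio t).image e := by
    ext j
    simp [Fin.exists_fin_succ, eq_comm (a := x), and_assoc, and_left_comm]
  have first : C \ (Iio 0).image (Fin.Embedding.cons e hx) = C := by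
    rw [show Iio (0 : Fin (k + 1)) = ∅ from Iio_bot, image_empty, sdiff_empty]
  simp only [prPL, mem_iff, Fin.prod_univ_succ, first, remaining, mul_ite, mul_zero]
  rfl

lemma sum_prPL_cons (u : Fin n → ℝ) (e : Fin k ↪ Fin n) (C : Finset (Fin n)) :
    ∑ x : {x // x ∉ Set.range e}, prPL n (k + 1) u (Fin.Embedding.cons e x.2) C =
      ∑ x ∈ C, Real.exp (u x) / (∑ j ∈ C, Real.exp (u j)) * prPL n k u e (C.erase x) := by
  rw [← Fintype.sum_ite_mem C]
  refine Fintype.sum_of_injective _ Subtype.val_injective _ _ (fun x hx => ?_) fun x => ?_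
  · obtain ⟨t, rfl⟩ : x ∈ Set.range e := by simpa using hx
    rw [prPL_eq_zero_of_notMem u (notMem_erase (e t) C), mul_zero, ite_self]
  · split_ifs with hxC
    · exact prPL_cons u x.2 hxC
    · exact prPL_eq_zero_of_notMem (t := 0) u hxC

lemma sum_prPL (u : Fin n → ℝ) {C : Finset (Fin n)} (hC : k ≤ #C) :
    ∑ r : Fin k ↪ Fin n, prPL n k u r C = 1 := by
  induction k generalizing C with
  | zero => simp [prPL]
  | succ k ih =>
    have nonempty : C.Nonempty := card_pos.1 (by lia)
    calc ∑ r : Fin (k + 1) ↪ Fin n, prPL n (k + 1) u r C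
      _ = ∑ x ∈ C, Real.exp (u x) / (∑ j ∈ C, Real.exp (u j)) *
            ∑ e : Fin k ↪ Fin n, prPL n k u e (C.erase x) := by
        simp_rw [sum_embedding_fin_succ, sum_prPL_cons, mul_sum]
        exact sum_comm
      _ = ∑ x ∈ C, Real.exp (u x) / (∑ j ∈ C, Real.exp (u j)) := by
        refine sum_congr rfl fun x hx => ?_
        rw [ih (by rw [card_erase_of_mem hx]; lia), mul_one]
      _ = 1 := by
        rw [← sum_div]
        exact div_self (sum_pos (fun j _ => Real.exp_pos (u j)) nonempty).ne'

lemma considerWeight_nonneg {p : Fin n → ℝ} (h0 : ∀ i, 0 ≤ p i) (h1 : ∀ i, p i ≤ 1)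
    (C : Finset (Fin n)) : 0 ≤ considerWeight n p C :=
  mul_nonneg (prod_nonneg fun i _ => h0 i) (prod_nonneg fun i _ => sub_nonneg.2 (h1 i))

lemma zConst_pos (hk : k ≤ n) {p : Fin n → ℝ} (h0 : ∀ i, 0 < p i) (h1 : ∀ i, p i ≤ 1) :
    0 < zConst n k p := by
  refine sum_pos' (fun C _ => considerWeight_nonneg (fun i => (h0 i).le) h1 C)
    ⟨univ, by simpa using hk, ?_⟩
  simpa [considerWeight] using prod_pos fun i _ => h0 i

lemma sum_prC {p : Fin n → ℝ} (hz : zConst n k p ≠ 0) :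
    ∑ C : Finset (Fin n), prC n k p C = 1 := by
  simp_rw [prC]
  rw [← sum_filter, ← sum_div]
  exact div_self hz

lemma sum_prPLC (u : Fin n → ℝ) {p : Fin n → ℝ} (hz : zConst n k p ≠ 0) :
    ∑ r : Fin k ↪ Fin n, prPLC n k u p r = 1 := by
  simp_rw [prPLC]
  rw [sum_comm, ← sum_prC hz]
  refine sum_congr rfl fun C _ => ?_
  rw [← mul_sum]
  by_cases hC : k ≤ #C
  · rw [sum_prPL u hC, mul_one]
  · simp [prC, hC]

lemma prPL_map {m : ℕ} (u : Fin m → ℝ) (f : Fin n ↪ Fin m) (r : Fin k ↪ Fin n)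
    (C : Finset (Fin n)) :
    prPL m k u (r.trans f) (C.map f) = prPL n k (u ∘ f) r C := by
  have remaining (t : Fin k) :
      C.map f \ (Iio t).image (r.trans f) = (C \ (Iio t).image r).map f := by
    rw [Finset.map_sdiff, map_eq_image f ((Iio t).image r), image_image]
    rfl
  simp [prPL, remaining]

lemma considerWeight_map (p : Fin n → ℝ) (σ : Equiv.Perm (Fin n)) (C : Finset (Fin n)) :
    considerWeight n p (C.map σ.toEmbedding) = considerWeight n (p ∘ σ) C := by
  have compl_map : (C.map σ.toEmbedding)ᶜ = Cᶜ.map σ.toEmbedding := by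
    rw [compl_eq_univ_sdiff, compl_eq_univ_sdiff, Finset.map_sdiff, map_univ_equiv]
  simp [considerWeight, compl_map]

lemma zConst_comp_perm (k : ℕ) (p : Fin n → ℝ) (σ : Equiv.Perm (Fin n)) :
    zConst n k (p ∘ σ) = zConst n k p := by
  simp_rw [zConst, sum_filter]
  refine Fintype.sum_equiv σ.finsetCongr _ _ fun C => ?_
  simp [considerWeight_map]

lemma prC_map (k : ℕ) (p : Fin n → ℝ) (σ : Equiv.Perm (Fin n)) (C : Finset (Fin n)) :
    prC n k p (C.map σ.toEmbedding) = prC n k (p ∘ σ) C := by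
  simp [prC, considerWeight_map, zConst_comp_perm]

lemma prPLC_trans_perm (u p : Fin n → ℝ) (σ : Equiv.Perm (Fin n)) (r : Fin k ↪ Fin n) :
    prPLC n k u p (r.trans σ.toEmbedding) = prPLC n k (u ∘ σ) (p ∘ σ) r := by
  refine (Fintype.sum_equiv σ.finsetCongr _ _ fun C => ?_).symm
  simp [prPL_map, prC_map]

lemma prPLC_const_eq_prPLC_const (a c : ℝ) (r s : Fin k ↪ Fin n) :
    prPLC n k (fun _ => a) (fun _ => c) r = prPLC n k (fun _ => a) (fun _ => c) s := by
  obtain ⟨σ, rfl⟩ := (Equiv.Perm.isMultiplyPretransitive (Fin n) k).exists_smul_eq r s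
  exact (prPLC_trans_perm (fun _ => a) (fun _ => c) σ r).symm

lemma prPLC_const (a : ℝ) {c : ℝ} (h0 : 0 < c) (h1 : c ≤ 1) (r : Fin k ↪ Fin n) :
    prPLC n k (fun _ => a) (fun _ => c) r = (n.descFactorial k : ℝ)⁻¹ := by
  have hk : k ≤ n := by simpa using Fintype.card_le_of_embedding r
  have total : ∑ _s : Fin k ↪ Fin n, prPLC n k (fun _ => a) (fun _ => c) r = 1 := by
    rw [← sum_prPLC (fun _ => a) (zConst_pos hk (fun _ => h0) fun _ => h1).ne']
    exact sum_congr rfl fun s _ => prPLC_const_eq_prPLC_const a c r s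
  refine eq_inv_of_mul_eq_one_right ?_
  simpa [Fintype.card_embedding_eq] using total

/-- Non-identifiability of consideration probabilities in the PL+C model. -/
theorem nonidentifiability :
    ∀ n k : ℕ, 1 ≤ n → 1 ≤ k → k ≤ n →
      ∃ (u p p' : Fin n → ℝ),
        (∀ a, 0 < p a ∧ p a ≤ 1) ∧ (∀ a, 0 < p' a ∧ p' a ≤ 1) ∧ p ≠ p' ∧
        ∀ r : Fin k ↪ Fin n, prPLC n k u p r = prPLC n k u p' r := by
  intro n k hn _ _
  refine ⟨fun _ => 0, fun _ => 1, fun _ => 1 / 2, fun _ => by norm_num, fun _ => by norm_num,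
    fun h => absurd (congrFun h ⟨0, hn⟩) (by norm_num), fun r => ?_⟩
  rw [prPLC_const 0 one_pos le_rfl, prPLC_const 0 one_half_pos one_half_lt_one.le]
end
end

section
/- Let R be a random top-k ranking generated by the PL+C model, and for items i, j ∈ U let i ≻_R j denote that i is ranked higher (closer to first) than j in R. If Pr(i ≻_R j | i, j ∈ R) > 1/2, then u_i > u_j. -/
open scoped Classical
open Finset

noncomputable section

/-- The set of length-`k` rankings containing both `i` and `j`, with `i` ranked above `j`. -/
def aboveSet (n k : ℕ) (i j : Fin n) : Finset (Fin k ↪ Fin n) :=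
  Finset.univ.filter (fun r => ∃ s t : Fin k, s < t ∧ r s = i ∧ r t = j)

/-- The set of length-`k` rankings containing both `i` and `j`. -/
def bothSet (n k : ℕ) (i j : Fin n) : Finset (Fin k ↪ Fin n) :=
  Finset.univ.filter (fun r => (∃ s : Fin k, r s = i) ∧ ∃ t : Fin k, r t = j)

/-!
Fix a consideration set `C`. Exchanging the items `i` and `j` in a ranking that places `i` above `j`
preserves the product of the Plackett–Luce numerators; the denominators change only between the two
positions, where `i` rather than `j` is now still available. If `u i ≤ u j` they can only shrink, so
rankings with `j` above `i` are at least as likely as those with `i` above `j`. This holds for every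
`C`, hence for every mixture over `C`.
-/

theorem sum_comp_swap_le_sum {α M : Type*} [DecidableEq α] [AddCommMonoid M] [PartialOrder M]
    [IsOrderedAddMonoid M] {f : α → M} {i j : α} {S : Finset α} (hf : f i ≤ f j)
    (hS : i ∈ S → j ∈ S) : ∑ x ∈ S, f (Equiv.swap i j x) ≤ ∑ x ∈ S, f x := by
  by_cases hi : i ∈ S
  · refine ((Equiv.swap i j).sum_comp S f fun x hx ↦ ?_).le
    rcases (Equiv.swap_apply_ne_self_iff.1 hx).2 with rfl | rfl
    exacts [hi, hS hi]
  · refine sum_le_sum fun x hx ↦ ?_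
    have hxi : x ≠ i := ne_of_mem_of_not_mem hx hi
    rcases eq_or_ne x j with rfl | hxj
    · rwa [Equiv.swap_apply_right]
    · rw [Equiv.swap_apply_of_ne_of_ne hxi hxj]

section

variable {n k : ℕ} {u p : Fin n → ℝ} {i j : Fin n} {r : Fin k ↪ Fin n} {C : Finset (Fin n)}

theorem mem_aboveSet : r ∈ aboveSet n k i j ↔ ∃ s t, s < t ∧ r s = i ∧ r t = j := by
  simp only [aboveSet, mem_filter, mem_univ, true_and]

theorem smul_mem_aboveSet_iff (σ : Equiv.Perm (Fin n)) :
    σ • r ∈ aboveSet n k (σ i) (σ j) ↔ r ∈ aboveSet n k i j := by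
  simp only [mem_aboveSet, Function.Embedding.smul_apply, Equiv.Perm.smul_def,
    EmbeddingLike.apply_eq_iff_eq]

theorem disjoint_aboveSet_swap : Disjoint (aboveSet n k i j) (aboveSet n k j i) := by
  refine disjoint_left.2 fun r hij hji ↦ ?_
  obtain ⟨s, t, hst, rfl, rfl⟩ := mem_aboveSet.1 hij
  obtain ⟨t', s', hts, ht, hs⟩ := mem_aboveSet.1 hji
  rw [r.injective ht, r.injective hs] at hts
  exact hst.asymm hts

theorem aboveSet_union_swap_subset_bothSet :
    aboveSet n k i j ∪ aboveSet n k j i ⊆ bothSet n k i j := by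
  intro r hr
  simp only [bothSet, mem_filter, mem_univ, true_and]
  rcases mem_union.1 hr with h | h <;> obtain ⟨s, t, -, hs, ht⟩ := mem_aboveSet.1 h
  exacts [⟨⟨s, hs⟩, t, ht⟩, ⟨⟨t, ht⟩, s, hs⟩]

theorem prC_nonneg (hp : ∀ a, 0 ≤ p a ∧ p a ≤ 1) (C : Finset (Fin n)) : 0 ≤ prC n k p C := by
  have considerWeight_nonneg (C) : 0 ≤ considerWeight n p C :=
    mul_nonneg (prod_nonneg fun a _ ↦ (hp a).1) (prod_nonneg fun a _ ↦ sub_nonneg.2 (hp a).2)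
  unfold prC
  split_ifs
  · exact div_nonneg (considerWeight_nonneg C) (sum_nonneg fun C _ ↦ considerWeight_nonneg C)
  · rfl

theorem prPL_nonneg : 0 ≤ prPL n k u r C := by
  unfold prPL
  split_ifs <;> positivity

theorem prPL_smul_map (σ : Equiv.Perm (Fin n)) :
    prPL n k u (σ • r) (C.map σ.toEmbedding) = prPL n k (u ∘ σ) r C := by
  have remaining_map (t : Fin k) : C.map σ.toEmbedding \ (Iio t).image (σ • r) =
      (C \ (Iio t).image r).map σ.toEmbedding := by
    rw [Finset.map_sdiff, map_eq_image _ ((Iio t).image r), image_image]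
    rfl
  simp only [prPL, remaining_map, sum_map, Function.Embedding.smul_apply, Equiv.Perm.smul_def,
    Equiv.coe_toEmbedding, mem_map_equiv, Equiv.symm_apply_apply, Function.comp_apply]

theorem prPL_le_prPL_comp_swap (hu : u i ≤ u j) (hr : r ∈ aboveSet n k i j)
    (hC : ∀ t, r t ∈ C) : prPL n k u r C ≤ prPL n k (u ∘ Equiv.swap i j) r C := by
  obtain ⟨s, t, hst, rfl, rfl⟩ := mem_aboveSet.1 hr
  have numerators_eq : ∏ x, Real.exp (u (Equiv.swap (r s) (r t) (r x))) =
      ∏ x, Real.exp (u (r x)) := by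
    simp only [r.swap_apply]
    exact Equiv.prod_comp (Equiv.swap s t) fun x ↦ Real.exp (u (r x))
  have denominator_le (x : Fin k) :
      ∑ a ∈ C \ (Iio x).image r, Real.exp (u (Equiv.swap (r s) (r t) a)) ≤
        ∑ a ∈ C \ (Iio x).image r, Real.exp (u a) := by
    refine sum_comp_swap_le_sum (f := fun a ↦ Real.exp (u a)) (Real.exp_le_exp.2 hu) fun hs ↦ ?_
    simp only [mem_sdiff, hC, mem_image, mem_Iio, EmbeddingLike.apply_eq_iff_eq, exists_eq_right,
      true_and, not_lt] at hs ⊢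
    exact hs.trans hst.le
  have denominator_pos (x : Fin k) (v : Fin n → ℝ) :
      0 < ∑ a ∈ C \ (Iio x).image r, Real.exp (v a) := by
    refine sum_pos (fun a _ ↦ Real.exp_pos _) ⟨r x, ?_⟩
    simp [hC]
  simp only [prPL, if_pos hC, prod_div_distrib, Function.comp_apply, numerators_eq]
  exact div_le_div_of_nonneg_left (prod_nonneg fun _ _ ↦ (Real.exp_pos _).le)
    (prod_pos fun x _ ↦ denominator_pos x _)
    (prod_le_prod (fun x _ ↦ (denominator_pos x _).le) fun x _ ↦ denominator_le x)

theorem prPL_le_prPL_swap_smul (hu : u i ≤ u j) (hr : r ∈ aboveSet n k i j) :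
    prPL n k u r C ≤ prPL n k u (Equiv.swap i j • r) C := by
  by_cases hC : ∀ t, r t ∈ C
  · have map_swap_eq : C.map (Equiv.swap i j).toEmbedding = C := by
      obtain ⟨s, t, -, rfl, rfl⟩ := mem_aboveSet.1 hr
      refine map_perm fun x hx ↦ ?_
      rcases (Equiv.swap_apply_ne_self_iff.1 hx).2 with rfl | rfl <;> exact hC _
    calc prPL n k u r C ≤ prPL n k (u ∘ Equiv.swap i j) r C := prPL_le_prPL_comp_swap hu hr hC
      _ = prPL n k u (Equiv.swap i j • r) C := by rw [← prPL_smul_map, map_swap_eq]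
  · rw [prPL, if_neg hC]
    exact prPL_nonneg

theorem prPLset_aboveSet_le_swap (hu : u i ≤ u j) (C : Finset (Fin n)) :
    prPLset n k u (aboveSet n k i j) C ≤ prPLset n k u (aboveSet n k j i) C :=
  calc ∑ r ∈ aboveSet n k i j, prPL n k u r C
      ≤ ∑ r ∈ aboveSet n k i j, prPL n k u (Equiv.swap i j • r) C :=
        sum_le_sum fun _ hr ↦ prPL_le_prPL_swap_smul hu hr
    _ = ∑ r ∈ aboveSet n k j i, prPL n k u r C := by
        refine sum_equiv (MulAction.toPerm (Equiv.swap i j)) (fun r ↦ ?_) fun _ _ ↦ rfl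
        rw [← smul_mem_aboveSet_iff (Equiv.swap i j), Equiv.swap_apply_left,
          Equiv.swap_apply_right]
        rfl

theorem prPLset_aboveSet_add_swap_le_bothSet (C : Finset (Fin n)) :
    prPLset n k u (aboveSet n k i j) C + prPLset n k u (aboveSet n k j i) C ≤
      prPLset n k u (bothSet n k i j) C := by
  unfold prPLset
  rw [← sum_union disjoint_aboveSet_swap]
  exact sum_le_sum_of_subset_of_nonneg aboveSet_union_swap_subset_bothSet
    fun _ _ _ ↦ prPL_nonneg

theorem prPLCset_eq_sum_prC_mul_prPLset (R : Finset (Fin k ↪ Fin n)) :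
    prPLCset n k u p R = ∑ C, prC n k p C * prPLset n k u R C := by
  simp only [prPLCset, prPLC, prPLset, mul_sum]
  exact sum_comm

theorem infer_relative_utility_general {w : Finset (Fin n) → ℝ} (hw : ∀ C, 0 ≤ w C)
    (hpos : 0 < ∑ C, w C * prPLset n k u (bothSet n k i j) C)
    (hmaj : (∑ C, w C * prPLset n k u (aboveSet n k i j) C) /
      (∑ C, w C * prPLset n k u (bothSet n k i j) C) > 1 / 2) :
    u i > u j := by
  by_contra! hu
  have two_mul_above_le_both : 2 * ∑ C, w C * prPLset n k u (aboveSet n k i j) C ≤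
      ∑ C, w C * prPLset n k u (bothSet n k i j) C := by
    rw [mul_sum]
    refine sum_le_sum fun C _ ↦ ?_
    rw [mul_left_comm]
    refine mul_le_mul_of_nonneg_left ?_ (hw C)
    linarith [prPLset_aboveSet_le_swap (k := k) hu C,
      prPLset_aboveSet_add_swap_le_bothSet (k := k) (u := u) (i := i) (j := j) C]
  rw [gt_iff_lt, lt_div_iff₀ hpos] at hmaj
  linarith

end

/-- if, conditioned on both `i` and `j` appearing in a PL+C ranking, `i` is
ranked above `j` with probability greater than 1/2, then `u i > u j`. -/
theorem infer_relative_utility (n k : ℕ) (u p : Fin n → ℝ) (i j : Fin n)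
    (hp : ∀ a, 0 < p a ∧ p a ≤ 1)
    (hpos : 0 < prPLCset n k u p (bothSet n k i j))
    (hmaj : prPLCset n k u p (aboveSet n k i j) / prPLCset n k u p (bothSet n k i j)
            > 1 / 2) :
    u i > u j := by
  rw [prPLCset_eq_sum_prC_mul_prPLset] at hpos
  rw [prPLCset_eq_sum_prC_mul_prPLset, prPLCset_eq_sum_prC_mul_prPLset] at hmaj
  exact infer_relative_utility_general (prC_nonneg fun a ↦ ⟨(hp a).1.le, (hp a).2⟩) hpos hmaj
end
end

section
/- Let r be a length-k ranking containing both items i and j with i ranked above j, let r_swap be r with the positions of i and j exchanged, and let C ⊆ U contain all items of r. If u_i > u_j, then Pr_PL(r | C) > Pr_PL(r_swap | C). -/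
open scoped Classical
open Finset

noncomputable section

/-!
Relabelling the items by a permutation is the same as permuting the utilities, so swapping `i` and
`j` in the ranking amounts to swapping their utilities. This leaves the product of the numerators
unchanged. At each choice the items still available include `j` whenever they include `i`, so
giving `j` the larger utility can only increase the denominator, strictly so when `j` is chosen,
since `i` is gone by then.
-/

section SumSwap

variable {ι M : Type*} [DecidableEq ι] {i j : ι} {A : Finset ι}

lemma map_swap_eq_self (hi : i ∈ A) (hj : j ∈ A) : A.map (Equiv.swap i j).toEmbedding = A := by
  refine map_perm fun x hx => ?_
  rcases (Equiv.swap_apply_ne_self_iff.1 hx).2 with rfl | rfl <;> assumption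

lemma sum_swap_apply [AddCommMonoid M] (w : ι → M) (hi : i ∈ A) (hj : j ∈ A) :
    ∑ x ∈ A, w (Equiv.swap i j x) = ∑ x ∈ A, w x := by
  simpa only [map_swap_eq_self hi hj, Equiv.coe_toEmbedding] using
    (sum_map A (Equiv.swap i j).toEmbedding w).symm

lemma le_apply_swap [Preorder M] {w : ι → M} (hw : w j ≤ w i) {x : ι} (hx : x ≠ i) :
    w x ≤ w (Equiv.swap i j x) := by
  by_cases hxj : x = j
  · rwa [hxj, Equiv.swap_apply_right]
  · rw [Equiv.swap_apply_of_ne_of_ne hx hxj]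

lemma sum_le_sum_swap_apply [AddCommMonoid M] [PartialOrder M] [IsOrderedAddMonoid M] {w : ι → M}
    (hw : w j ≤ w i) (hA : i ∈ A → j ∈ A) :
    ∑ x ∈ A, w x ≤ ∑ x ∈ A, w (Equiv.swap i j x) := by
  by_cases hi : i ∈ A
  · exact (sum_swap_apply w hi (hA hi)).ge
  · exact sum_le_sum fun x hx => le_apply_swap hw (ne_of_mem_of_not_mem hx hi)

lemma sum_lt_sum_swap_apply [AddCommMonoid M] [PartialOrder M] [IsOrderedCancelAddMonoid M]
    {w : ι → M} (hw : w j < w i) (hi : i ∉ A) (hj : j ∈ A) :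
    ∑ x ∈ A, w x < ∑ x ∈ A, w (Equiv.swap i j x) :=
  sum_lt_sum (fun _ hx => le_apply_swap hw.le (ne_of_mem_of_not_mem hx hi))
    ⟨j, hj, by rwa [Equiv.swap_apply_right]⟩

lemma prod_swap_apply_embedding {κ : Type*} [Fintype κ] [CommMonoid M] (w : ι → M) (r : κ ↪ ι)
    (s t : κ) : ∏ a, w (Equiv.swap (r s) (r t) (r a)) = ∏ a, w (r a) := by
  simp only [r.injective.swap_apply]
  exact Equiv.prod_comp (Equiv.swap s t) fun a => w (r a)

end SumSwap

section Remaining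

variable {ι κ : Type*} [DecidableEq ι] [Preorder κ] [LocallyFiniteOrderBot κ]
  {r : κ ↪ ι} {C : Finset ι}

/-- The items of `C` still available when position `a` of the ranking `r` is filled, i.e. those not
ranked at an earlier position. The sums of `exp u` over these sets are the Plackett–Luce
denominators. -/
def remaining (r : κ ↪ ι) (C : Finset ι) (a : κ) : Finset ι :=
  C \ (Iio a).image r

lemma apply_mem_remaining_iff {a b : κ} : r b ∈ remaining r C a ↔ r b ∈ C ∧ ¬ b < a := by
  simp [remaining]

lemma remaining_trans_map {ι' : Type*} [DecidableEq ι'] (r : κ ↪ ι) (f : ι ↪ ι') (C : Finset ι)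
    (a : κ) : remaining (r.trans f) (C.map f) a = (remaining r C a).map f := by
  simp only [remaining, map_eq_image, image_sdiff _ _ f.injective, image_image,
    Function.Embedding.coe_trans]

lemma sum_remaining_pos {M : Type*} [AddCommMonoid M] [PartialOrder M] [IsOrderedCancelAddMonoid M]
    {w : ι → M} (hw : ∀ x, 0 < w x) {a : κ} (ha : r a ∈ C) :
    0 < ∑ x ∈ remaining r C a, w x :=
  sum_pos (fun x _ => hw x) ⟨r a, apply_mem_remaining_iff.2 ⟨ha, lt_irrefl a⟩⟩

lemma prod_sum_remaining_lt_swap_apply {R : Type*} [CommSemiring R] [PartialOrder R]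
    [IsStrictOrderedRing R] [Fintype κ] {w : ι → R} (hw : ∀ x, 0 < w x) (hrC : ∀ a, r a ∈ C)
    {s t : κ} (hst : s < t) (hlt : w (r t) < w (r s)) :
    ∏ a, ∑ x ∈ remaining r C a, w x <
      ∏ a, ∑ x ∈ remaining r C a, w (Equiv.swap (r s) (r t) x) := by
  have later_remains (a : κ) (hs : r s ∈ remaining r C a) : r t ∈ remaining r C a :=
    apply_mem_remaining_iff.2
      ⟨hrC t, fun hta => (apply_mem_remaining_iff.1 hs).2 (hst.trans hta)⟩
  have hs : r s ∉ remaining r C t := fun hs => (apply_mem_remaining_iff.1 hs).2 hst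
  have ht : r t ∈ remaining r C t := apply_mem_remaining_iff.2 ⟨hrC t, lt_irrefl t⟩
  exact prod_lt_prod (fun a _ => sum_remaining_pos hw (hrC a))
    (fun a _ => sum_le_sum_swap_apply hlt.le (later_remains a))
    ⟨t, mem_univ t, sum_lt_sum_swap_apply hlt hs ht⟩

end Remaining

section PlackettLuce

variable {m n k : ℕ}

lemma prPL_eq_ite (u : Fin n → ℝ) (r : Fin k ↪ Fin n) (C : Finset (Fin n)) :
    prPL n k u r C =
      if ∀ a, r a ∈ C then
        ∏ a, Real.exp (u (r a)) / ∑ x ∈ remaining r C a, Real.exp (u x)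
      else 0 :=
  rfl

lemma prPL_eq_div (u : Fin n → ℝ) {r : Fin k ↪ Fin n} {C : Finset (Fin n)} (hrC : ∀ a, r a ∈ C) :
    prPL n k u r C =
      (∏ a, Real.exp (u (r a))) / ∏ a, ∑ x ∈ remaining r C a, Real.exp (u x) := by
  rw [prPL_eq_ite, if_pos hrC, prod_div_distrib]

lemma prPL_trans_map (u : Fin m → ℝ) (r : Fin k ↪ Fin n) (f : Fin n ↪ Fin m)
    (C : Finset (Fin n)) :
    prPL m k u (r.trans f) (C.map f) = prPL n k (u ∘ f) r C := by
  simp only [prPL_eq_ite, remaining_trans_map, sum_map, mem_map',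
    Function.Embedding.trans_apply, Function.comp_apply]

end PlackettLuce

/-- swapping a higher-utility item `i` (ranked above a lower-utility item `j`)
with `j` strictly decreases the Plackett–Luce probability of the ranking. -/
theorem swap_decreases_prPL (n k : ℕ) (u : Fin n → ℝ) (i j : Fin n)
    (r : Fin k ↪ Fin n) (C : Finset (Fin n)) (hu : u i > u j)
    (s t : Fin k) (hst : s < t) (hs : r s = i) (ht : r t = j)
    (hrC : ∀ a : Fin k, r a ∈ C) :
    prPL n k u r C > prPL n k u (r.trans (Equiv.swap i j).toEmbedding) C := by
  subst hs ht
  have hexp_pos (x : Fin n) : 0 < Real.exp (u x) := Real.exp_pos _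
  have hrelabel : prPL n k u (r.trans (Equiv.swap (r s) (r t)).toEmbedding) C =
      prPL n k (u ∘ Equiv.swap (r s) (r t)) r C := by
    simpa only [map_swap_eq_self (hrC s) (hrC t), Equiv.coe_toEmbedding] using
      prPL_trans_map u r (Equiv.swap (r s) (r t)).toEmbedding C
  rw [hrelabel, prPL_eq_div u hrC, prPL_eq_div _ hrC]
  simp only [Function.comp_apply]
  rw [prod_swap_apply_embedding fun x => Real.exp (u x)]
  exact div_lt_div_of_pos_left (prod_pos fun a _ => hexp_pos (r a))
    (prod_pos fun a _ => sum_remaining_pos hexp_pos (hrC a))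
    (prod_sum_remaining_lt_swap_apply hexp_pos hrC hst (Real.exp_lt_exp.2 hu))
end
end
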